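/- arXiv:2412.01915 — 2 statements merged into one kernel-verified Lean document; each statement's English description precedes it below -/
import Mathlib

section
/- Suppose F : D × 𝕏 → 𝕐 and F̄ : D × 𝕏 → 𝕐̄ are continuous and uniformly Lipschitz in 𝕏. Then for any continuous initial data U₀ : [0,ū_*] → 𝕐 and Ū₀ : [0,u_*] → 𝕐̄ there exist U : D → 𝕐 and Ū : D → 𝕐̄, both continuous, such that the partial derivatives ∂U/∂u and ∂Ū/∂ū exist and are continuous on D and (U,Ū) solves the two-variable ODE system with data (F, F̄, U₀, Ū₀) on all of D; moreover this solution is unique, i.e. any two pairs (U,Ū) with these properties coincide on D. -/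
open Set

/-- The domain `D = [0,u_*] × [0,ū_*] ⊆ ℝ²`. -/
def Dset (us ubs : ℝ) : Set (ℝ × ℝ) := Set.Icc 0 us ×ˢ Set.Icc 0 ubs

/-- `(U, Ū)` solves the two-variable ODE system with data `(F, F̄, U₀, Ū₀)` on `D`:
`U, Ū` are continuous on `D`, the partial derivatives `∂U/∂u` and `∂Ū/∂ū` exist on `D`
and satisfy `∂U/∂u = F(u,ū,U,Ū)`, `∂Ū/∂ū = F̄(u,ū,U,Ū)` (hence they are continuous,
being given by continuous expressions), together with the initial conditions
`U(0,ū) = U₀(ū)` and `Ū(u,0) = Ū₀(u)`. -/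
def IsSolution {Y Yb : Type*} [NormedAddCommGroup Y] [NormedSpace ℝ Y]
    [NormedAddCommGroup Yb] [NormedSpace ℝ Yb]
    (us ubs : ℝ)
    (F : ℝ → ℝ → Y × Yb → Y) (Fb : ℝ → ℝ → Y × Yb → Yb)
    (U₀ : ℝ → Y) (Ub₀ : ℝ → Yb)
    (U : ℝ × ℝ → Y) (Ub : ℝ × ℝ → Yb) : Prop :=
  ContinuousOn U (Dset us ubs) ∧ ContinuousOn Ub (Dset us ubs) ∧
  (∀ p ∈ Dset us ubs,
    HasDerivWithinAt (fun t => U (t, p.2)) (F p.1 p.2 (U p, Ub p)) (Set.Icc 0 us) p.1) ∧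
  (∀ p ∈ Dset us ubs,
    HasDerivWithinAt (fun v => Ub (p.1, v)) (Fb p.1 p.2 (U p, Ub p)) (Set.Icc 0 ubs) p.2) ∧
  (∀ ub ∈ Set.Icc (0:ℝ) ubs, U (0, ub) = U₀ ub) ∧
  (∀ u ∈ Set.Icc (0:ℝ) us, Ub (u, 0) = Ub₀ u)

/-!
Integrating the two equations turns the system into a fixed-point equation for the Picard operator
`T` on the Banach space `C(D, 𝕏)`. Each component of `T` integrates in one variable only, but both
integrals raise the power of `u + ū`: a difference bounded by `C (u + ū)ⁿ / n!` is mapped to one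
bounded by `M C (u + ū)ⁿ⁺¹ / (n + 1)!`. Hence `Tⁿ` has Lipschitz constant at most
`(M (u_* + ū_*))ⁿ / n!`, some iterate is a contraction, and `T` has exactly one fixed point.
-/

open Function MeasureTheory
open scoped Nat NNReal

section Calculus

variable {E X : Type*} [NormedAddCommGroup E] [NormedSpace ℝ E]

theorem hasDerivWithinAt_Icc_and_left_eq_iff_eq_add_integral [CompleteSpace E]
    {a b : ℝ} (hab : a ≤ b) {f g : ℝ → E} (hg : ContinuousOn g (Icc a b)) {c : E} :
    ((∀ t ∈ Icc a b, HasDerivWithinAt f (g t) (Icc a b) t) ∧ f a = c) ↔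
      ∀ t ∈ Icc a b, f t = c + ∫ s in a..t, g s := by
  constructor
  · rintro ⟨hf, rfl⟩ t ht
    have hsub : Icc a t ⊆ Icc a b := Icc_subset_Icc_right ht.2
    have hint : ∫ s in a..t, g s = f t - f a :=
      intervalIntegral.integral_eq_sub_of_hasDerivAt_of_le ht.1
        (fun s hs => (hf s (hsub hs)).continuousWithinAt.mono hsub)
        (fun s hs => (hf s (hsub (Ioo_subset_Icc_self hs))).hasDerivAt
          (Icc_mem_nhds hs.1 (hs.2.trans_le ht.2)))
        ((hg.mono hsub).intervalIntegrable_of_Icc ht.1)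
    rw [hint, add_sub_cancel]
  · intro hf
    refine ⟨fun t ht => ?_, by simpa using hf a (left_mem_Icc.2 hab)⟩
    exact (ODE.hasDerivWithinAt_picard_Icc (f := fun s _ => g s) (α := 0) (u := univ)
      (left_mem_Icc.2 hab) (hg.comp continuousOn_fst fun q hq => hq.1) continuousOn_const
      (fun _ _ => mem_univ _) c ht).congr_of_mem hf ht

theorem continuousOn_integral_of_continuousOn [TopologicalSpace X] {a b : ℝ}
    {S : Set X} {f : X → ℝ → E} (hf : ContinuousOn (uncurry f) (S ×ˢ Icc a b))
    {u : X → ℝ} (hu : ContinuousOn u S) (huS : MapsTo u S (Icc a b)) :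
    ContinuousOn (fun x => ∫ s in a..u x, f x s) S := by
  rcases S.eq_empty_or_nonempty with rfl | ⟨x₀, hx₀⟩
  · exact continuousOn_empty _
  have hab : a ≤ b := (huS hx₀).1.trans (huS hx₀).2
  rw [continuousOn_iff_continuous_domRestrict] at hu ⊢
  have hext : Continuous (uncurry fun (x : S) s => f x (projIcc a b hab s)) :=
    hf.comp_continuous (f := fun q : S × ℝ => ((q.1 : X), (projIcc a b hab q.2 : ℝ)))
      (by fun_prop) fun q => ⟨q.1.2, (projIcc a b hab q.2).2⟩
  refine (intervalIntegral.continuous_parametric_intervalIntegral_of_continuous (a₀ := a)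
    (μ := volume) hext hu).congr fun x => intervalIntegral.integral_congr fun s hs => ?_
  rw [domRestrict_apply, uIcc_of_le (huS x.2).1] at hs
  simp only [projIcc_of_mem hab (Icc_subset_Icc_right (huS x.2).2 hs)]

theorem norm_integral_le_of_norm_le_mul_pow_div_factorial {a t c C : ℝ} {n : ℕ} {f : ℝ → E}
    (hat : a ≤ t) (hac : 0 ≤ a + c) (hC : 0 ≤ C)
    (hf : ∀ s ∈ Icc a t, ‖f s‖ ≤ C * ((s + c) ^ n / n !)) :
    ‖∫ s in a..t, f s‖ ≤ C * ((t + c) ^ (n + 1) / (n + 1)!) :=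
  calc
    ‖∫ s in a..t, f s‖ ≤ ∫ s in a..t, C * ((s + c) ^ n / n !) :=
      intervalIntegral.norm_integral_le_of_norm_le hat
        (.of_forall fun s hs => hf s (Ioc_subset_Icc_self hs))
        (Continuous.intervalIntegrable (by fun_prop) a t)
    _ = C * (((t + c) ^ (n + 1) - (a + c) ^ (n + 1)) / (n + 1)!) := by
      rw [intervalIntegral.integral_const_mul, intervalIntegral.integral_div,
        intervalIntegral.integral_comp_add_right (fun s => s ^ n), integral_pow, div_div,
        Nat.factorial_succ]
      push_cast
      rfl
    _ ≤ C * ((t + c) ^ (n + 1) / (n + 1)!) := by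
      gcongr
      exact sub_le_self _ (pow_nonneg hac _)

theorem norm_integral_sub_integral_le_of_lipschitzWith [SeminormedAddCommGroup X]
    {a t c C : ℝ} {n : ℕ} {K : ℝ≥0} {G : ℝ → X → E} {v w : ℝ → X}
    (hat : a ≤ t) (hac : 0 ≤ a + c) (hC : 0 ≤ C) (hG : ∀ s ∈ Icc a t, LipschitzWith K (G s))
    (hv : IntervalIntegrable (fun s => G s (v s)) volume a t)
    (hw : IntervalIntegrable (fun s => G s (w s)) volume a t)
    (hvw : ∀ s ∈ Icc a t, ‖v s - w s‖ ≤ C * ((s + c) ^ n / n !)) :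
    ‖(∫ s in a..t, G s (v s)) - ∫ s in a..t, G s (w s)‖ ≤
      K * C * ((t + c) ^ (n + 1) / (n + 1)!) := by
  rw [← intervalIntegral.integral_sub hv hw]
  refine norm_integral_le_of_norm_le_mul_pow_div_factorial hat hac (by positivity) fun s hs => ?_
  calc
    ‖G s (v s) - G s (w s)‖ ≤ K * ‖v s - w s‖ := (hG s hs).norm_sub_le _ _
    _ ≤ K * (C * ((s + c) ^ n / n !)) := by gcongr; exact hvw s hs
    _ = K * C * ((s + c) ^ n / n !) := (mul_assoc ..).symm

end Calculus

theorem existsUnique_isFixedPt_of_contractingWith_iterate {α : Type*} [MetricSpace α]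
    [CompleteSpace α] [Nonempty α] {K : ℝ≥0} {f : α → α} {n : ℕ}
    (hf : ContractingWith K f^[n]) : ∃! x, IsFixedPt f x :=
  ⟨_, hf.isFixedPt_fixedPoint_iterate, fun _ hx => hf.fixedPoint_unique (hx.iterate n)⟩

section Superposition

variable {α β X Z : Type*} [TopologicalSpace α] [TopologicalSpace β] [TopologicalSpace X]
  [TopologicalSpace Z]

theorem continuousOn_comp_graph {S : Set α} {G : α × X → Z} {V : α → X}
    (hG : ContinuousOn G (S ×ˢ univ)) (hV : ContinuousOn V S) :
    ContinuousOn (fun p => G (p, V p)) S :=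
  hG.comp (continuousOn_id.prodMk hV) fun _ hp => ⟨hp, mem_univ _⟩

variable {A : Set α} {B : Set β} {G : α → β → X → Z} {V : α × β → X}

theorem continuousOn_comp_graph_slice_fst
    (hG : ContinuousOn (fun q : (α × β) × X => G q.1.1 q.1.2 q.2) ((A ×ˢ B) ×ˢ univ))
    (hV : ContinuousOn V (A ×ˢ B)) {b : β} (hb : b ∈ B) :
    ContinuousOn (fun a => G a b (V (a, b))) A :=
  (continuousOn_comp_graph hG hV).uncurry_right (f := fun a b => G a b (V (a, b))) b hb

theorem continuousOn_comp_graph_slice_snd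
    (hG : ContinuousOn (fun q : (α × β) × X => G q.1.1 q.1.2 q.2) ((A ×ˢ B) ×ˢ univ))
    (hV : ContinuousOn V (A ×ˢ B)) {a : α} (ha : a ∈ A) :
    ContinuousOn (fun b => G a b (V (a, b))) B :=
  (continuousOn_comp_graph hG hV).uncurry_left (f := fun a b => G a b (V (a, b))) a ha

end Superposition

section ExtendByZero

variable {α E : Type*} [TopologicalSpace α] [TopologicalSpace E] [Zero E] {S : Set α}

/-- The extension by zero of a continuous map on `S` to the ambient space. It lets integrals over
real intervals be written for elements of `C(S, E)`; its values outside `S` play no role. -/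
noncomputable def extendByZero (V : C(S, E)) : α → E :=
  extend Subtype.val V 0

theorem extendByZero_coe (V : C(S, E)) (x : S) : extendByZero V x = V x :=
  Subtype.val_injective.extend_apply V 0 x

theorem continuousOn_extendByZero (V : C(S, E)) : ContinuousOn (extendByZero V) S :=
  continuousOn_iff_continuous_domRestrict.2 <|
    V.continuous.congr fun x => (extendByZero_coe V x).symm

end ExtendByZero

section Picard

variable {Y Yb : Type*} [NormedAddCommGroup Y] [NormedSpace ℝ Y]
  [NormedAddCommGroup Yb] [NormedSpace ℝ Yb] {us ubs : ℝ}
  {F : ℝ → ℝ → Y × Yb → Y} {Fb : ℝ → ℝ → Y × Yb → Yb} {U₀ : ℝ → Y} {Ub₀ : ℝ → Yb}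

instance : CompactSpace (Dset us ubs) :=
  isCompact_iff_compactSpace.1 (isCompact_Icc.prod isCompact_Icc)

/-- The right-hand side of the integrated system: `(U, Ū)` solves the two-variable ODE system
exactly when it is continuous and fixed by this map on `D`. -/
noncomputable def picardMap (F : ℝ → ℝ → Y × Yb → Y) (Fb : ℝ → ℝ → Y × Yb → Yb) (U₀ : ℝ → Y)
    (Ub₀ : ℝ → Yb) (V : ℝ × ℝ → Y × Yb) (p : ℝ × ℝ) : Y × Yb :=
  (U₀ p.2 + ∫ s in 0..p.1, F s p.2 (V (s, p.2)),
    Ub₀ p.1 + ∫ s in 0..p.2, Fb p.1 s (V (p.1, s)))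

theorem picardMap_eqOn_of_eqOn {V W : ℝ × ℝ → Y × Yb} (hVW : EqOn V W (Dset us ubs)) :
    EqOn (picardMap F Fb U₀ Ub₀ V) (picardMap F Fb U₀ Ub₀ W) (Dset us ubs) := by
  rintro ⟨u, v⟩ ⟨hu, hv⟩
  have hfst : ∀ s ∈ uIcc 0 u, V (s, v) = W (s, v) := fun s hs =>
    hVW ⟨uIcc_subset_Icc (left_mem_Icc.2 (hu.1.trans hu.2)) hu hs, hv⟩
  have hsnd : ∀ s ∈ uIcc 0 v, V (u, s) = W (u, s) := fun s hs =>
    hVW ⟨hu, uIcc_subset_Icc (left_mem_Icc.2 (hv.1.trans hv.2)) hv hs⟩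
  simp only [picardMap]
  congr 2 <;> refine intervalIntegral.integral_congr fun s hs => ?_
  · simp only [hfst s hs]
  · simp only [hsnd s hs]

theorem isSolution_iff_eqOn_picardMap [CompleteSpace Y] [CompleteSpace Yb]
    (hus : 0 ≤ us) (hubs : 0 ≤ ubs)
    (hF : ContinuousOn (fun q : (ℝ × ℝ) × Y × Yb => F q.1.1 q.1.2 q.2) (Dset us ubs ×ˢ univ))
    (hFb : ContinuousOn (fun q : (ℝ × ℝ) × Y × Yb => Fb q.1.1 q.1.2 q.2) (Dset us ubs ×ˢ univ))
    {V : ℝ × ℝ → Y × Yb} :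
    IsSolution us ubs F Fb U₀ Ub₀ (fun p => (V p).1) (fun p => (V p).2) ↔
      ContinuousOn V (Dset us ubs) ∧ EqOn V (picardMap F Fb U₀ Ub₀ V) (Dset us ubs) := by
  have integral_fst (hV : ContinuousOn V (Dset us ubs)) (v : ℝ) (hv : v ∈ Icc 0 ubs) :=
    hasDerivWithinAt_Icc_and_left_eq_iff_eq_add_integral (f := fun u => (V (u, v)).1) (c := U₀ v)
      hus (continuousOn_comp_graph_slice_fst hF hV hv)
  have integral_snd (hV : ContinuousOn V (Dset us ubs)) (u : ℝ) (hu : u ∈ Icc 0 us) :=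
    hasDerivWithinAt_Icc_and_left_eq_iff_eq_add_integral (f := fun v => (V (u, v)).2) (c := Ub₀ u)
      hubs (continuousOn_comp_graph_slice_snd hFb hV hu)
  constructor
  · rintro ⟨hU, hUb, hderiv, hderivb, hinit, hinitb⟩
    have hV : ContinuousOn V (Dset us ubs) := hU.prodMk hUb
    refine ⟨hV, fun ⟨u, v⟩ ⟨hu, hv⟩ => Prod.ext ?_ ?_⟩
    · exact (integral_fst hV v hv).1 ⟨fun s hs => hderiv (s, v) ⟨hs, hv⟩, hinit v hv⟩ u hu
    · exact (integral_snd hV u hu).1 ⟨fun s hs => hderivb (u, s) ⟨hu, hs⟩, hinitb u hu⟩ v hv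
  · rintro ⟨hV, hfix⟩
    have hfst (v : ℝ) (hv : v ∈ Icc 0 ubs) := (integral_fst hV v hv).2 fun u hu =>
      congrArg Prod.fst (hfix ⟨hu, hv⟩)
    have hsnd (u : ℝ) (hu : u ∈ Icc 0 us) := (integral_snd hV u hu).2 fun v hv =>
      congrArg Prod.snd (hfix ⟨hu, hv⟩)
    exact ⟨hV.fst, hV.snd, fun p hp => (hfst p.2 hp.2).1 p.1 hp.1,
      fun p hp => (hsnd p.1 hp.1).1 p.2 hp.2, fun v hv => (hfst v hv).2,
      fun u hu => (hsnd u hu).2⟩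

theorem continuousOn_picardMap
    (hF : ContinuousOn (fun q : (ℝ × ℝ) × Y × Yb => F q.1.1 q.1.2 q.2) (Dset us ubs ×ˢ univ))
    (hFb : ContinuousOn (fun q : (ℝ × ℝ) × Y × Yb => Fb q.1.1 q.1.2 q.2) (Dset us ubs ×ˢ univ))
    (hU₀ : ContinuousOn U₀ (Icc 0 ubs)) (hUb₀ : ContinuousOn Ub₀ (Icc 0 us))
    {V : ℝ × ℝ → Y × Yb} (hV : ContinuousOn V (Dset us ubs)) :
    ContinuousOn (picardMap F Fb U₀ Ub₀ V) (Dset us ubs) := by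
  have hfst : ContinuousOn (fun q : (ℝ × ℝ) × ℝ => F q.2 q.1.2 (V (q.2, q.1.2)))
      (Dset us ubs ×ˢ Icc 0 us) :=
    (continuousOn_comp_graph hF hV).comp (f := fun q : (ℝ × ℝ) × ℝ => (q.2, q.1.2))
      (by fun_prop) fun q hq => ⟨hq.2, hq.1.2⟩
  have hsnd : ContinuousOn (fun q : (ℝ × ℝ) × ℝ => Fb q.1.1 q.2 (V (q.1.1, q.2)))
      (Dset us ubs ×ˢ Icc 0 ubs) :=
    (continuousOn_comp_graph hFb hV).comp (f := fun q : (ℝ × ℝ) × ℝ => (q.1.1, q.2))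
      (by fun_prop) fun q hq => ⟨hq.1.1, hq.2⟩
  exact ((hU₀.comp continuousOn_snd fun p hp => hp.2).add
      (continuousOn_integral_of_continuousOn hfst continuousOn_fst fun p hp => hp.1)).prodMk
    ((hUb₀.comp continuousOn_fst fun p hp => hp.1).add
      (continuousOn_integral_of_continuousOn hsnd continuousOn_snd fun p hp => hp.2))

theorem norm_picardMap_sub_le {K : ℝ≥0}
    (hF : ContinuousOn (fun q : (ℝ × ℝ) × Y × Yb => F q.1.1 q.1.2 q.2) (Dset us ubs ×ˢ univ))
    (hFb : ContinuousOn (fun q : (ℝ × ℝ) × Y × Yb => Fb q.1.1 q.1.2 q.2) (Dset us ubs ×ˢ univ))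
    (hFlip : ∀ p ∈ Dset us ubs, LipschitzWith K (F p.1 p.2))
    (hFblip : ∀ p ∈ Dset us ubs, LipschitzWith K (Fb p.1 p.2))
    {V W : ℝ × ℝ → Y × Yb} (hV : ContinuousOn V (Dset us ubs)) (hW : ContinuousOn W (Dset us ubs))
    {C : ℝ} (hC : 0 ≤ C) {n : ℕ}
    (hVW : ∀ p ∈ Dset us ubs, ‖V p - W p‖ ≤ C * ((p.1 + p.2) ^ n / n !))
    {p : ℝ × ℝ} (hp : p ∈ Dset us ubs) :
    ‖picardMap F Fb U₀ Ub₀ V p - picardMap F Fb U₀ Ub₀ W p‖ ≤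
      K * C * ((p.1 + p.2) ^ (n + 1) / (n + 1)!) := by
  obtain ⟨u, v⟩ := p
  obtain ⟨hu, hv⟩ := hp
  have hIu : Icc 0 u ⊆ Icc 0 us := Icc_subset_Icc_right hu.2
  have hIv : Icc 0 v ⊆ Icc 0 ubs := Icc_subset_Icc_right hv.2
  have integrable_fst {W : ℝ × ℝ → Y × Yb} (hW : ContinuousOn W (Dset us ubs)) :=
    ((continuousOn_comp_graph_slice_fst hF hW hv).mono hIu).intervalIntegrable_of_Icc
      (μ := volume) hu.1
  have integrable_snd {W : ℝ × ℝ → Y × Yb} (hW : ContinuousOn W (Dset us ubs)) :=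
    ((continuousOn_comp_graph_slice_snd hFb hW hu).mono hIv).intervalIntegrable_of_Icc
      (μ := volume) hv.1
  simp only [picardMap, Prod.mk_sub_mk, add_sub_add_left_eq_sub, Prod.norm_mk]
  refine max_le ?_ ?_
  · exact norm_integral_sub_integral_le_of_lipschitzWith hu.1 (by simpa using hv.1) hC
      (fun s hs => hFlip (s, v) ⟨hIu hs, hv⟩) (integrable_fst hV) (integrable_fst hW)
      fun s hs => hVW (s, v) ⟨hIu hs, hv⟩
  · rw [add_comm u v]
    exact norm_integral_sub_integral_le_of_lipschitzWith hv.1 (by simpa using hu.1) hC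
      (fun s hs => hFblip (u, s) ⟨hu, hIv hs⟩) (integrable_snd hV) (integrable_snd hW)
      fun s hs => add_comm u s ▸ hVW (u, s) ⟨hu, hIv hs⟩

/-- The Picard operator on the Banach space `C(D, 𝕏)`; its fixed points are the solutions of the
two-variable ODE system. -/
noncomputable def picardOperator
    (hF : ContinuousOn (fun q : (ℝ × ℝ) × Y × Yb => F q.1.1 q.1.2 q.2) (Dset us ubs ×ˢ univ))
    (hFb : ContinuousOn (fun q : (ℝ × ℝ) × Y × Yb => Fb q.1.1 q.1.2 q.2) (Dset us ubs ×ˢ univ))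
    (hU₀ : ContinuousOn U₀ (Icc 0 ubs)) (hUb₀ : ContinuousOn Ub₀ (Icc 0 us))
    (V : C(Dset us ubs, Y × Yb)) : C(Dset us ubs, Y × Yb) where
  toFun p := picardMap F Fb U₀ Ub₀ (extendByZero V) p
  continuous_toFun := continuousOn_iff_continuous_domRestrict.1
    (continuousOn_picardMap hF hFb hU₀ hUb₀ (continuousOn_extendByZero V))

section Operator

variable
  (hF : ContinuousOn (fun q : (ℝ × ℝ) × Y × Yb => F q.1.1 q.1.2 q.2) (Dset us ubs ×ˢ univ))
  (hFb : ContinuousOn (fun q : (ℝ × ℝ) × Y × Yb => Fb q.1.1 q.1.2 q.2) (Dset us ubs ×ˢ univ))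
  (hU₀ : ContinuousOn U₀ (Icc 0 ubs)) (hUb₀ : ContinuousOn Ub₀ (Icc 0 us))

theorem isSolution_iff_exists_isFixedPt_picardOperator [CompleteSpace Y] [CompleteSpace Yb]
    (hus : 0 ≤ us) (hubs : 0 ≤ ubs) {U : ℝ × ℝ → Y} {Ub : ℝ × ℝ → Yb} :
    IsSolution us ubs F Fb U₀ Ub₀ U Ub ↔
      ∃ V : C(Dset us ubs, Y × Yb), IsFixedPt (picardOperator hF hFb hU₀ hUb₀) V ∧
        ∀ p : Dset us ubs, V p = (U p, Ub p) := by
  have eqOn_extend {V : C(Dset us ubs, Y × Yb)} (hV : ∀ p : Dset us ubs, V p = (U p, Ub p)) :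
      EqOn (extendByZero V) (fun p => (U p, Ub p)) (Dset us ubs) :=
    fun p hp => (extendByZero_coe V ⟨p, hp⟩).trans (hV ⟨p, hp⟩)
  rw [isSolution_iff_eqOn_picardMap (V := fun p => (U p, Ub p)) hus hubs hF hFb]
  constructor
  · rintro ⟨hcont, hfix⟩
    let V : C(Dset us ubs, Y × Yb) := ⟨_, continuousOn_iff_continuous_domRestrict.1 hcont⟩
    have hV (p : Dset us ubs) : V p = (U p, Ub p) := rfl
    refine ⟨V, ContinuousMap.ext fun p => ?_, hV⟩
    exact (picardMap_eqOn_of_eqOn (eqOn_extend hV) p.2).trans (hfix p.2).symm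
  · rintro ⟨V, hfix, hV⟩
    refine ⟨(continuousOn_extendByZero V).congr (eqOn_extend hV).symm, fun p hp => ?_⟩
    calc
      (U p, Ub p) = V ⟨p, hp⟩ := (hV ⟨p, hp⟩).symm
      _ = picardMap F Fb U₀ Ub₀ (extendByZero V) p := (DFunLike.congr_fun hfix ⟨p, hp⟩).symm
      _ = picardMap F Fb U₀ Ub₀ (fun p => (U p, Ub p)) p :=
        picardMap_eqOn_of_eqOn (eqOn_extend hV) hp

theorem norm_picardOperator_iterate_sub_apply_le {K : ℝ≥0}
    (hFlip : ∀ p ∈ Dset us ubs, LipschitzWith K (F p.1 p.2))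
    (hFblip : ∀ p ∈ Dset us ubs, LipschitzWith K (Fb p.1 p.2))
    (V W : C(Dset us ubs, Y × Yb)) (n : ℕ) (p : Dset us ubs) :
    ‖(picardOperator hF hFb hU₀ hUb₀)^[n] V p -
        (picardOperator hF hFb hU₀ hUb₀)^[n] W p‖ ≤
      K ^ n * ‖V - W‖ * ((p.1.1 + p.1.2) ^ n / n !) := by
  induction n generalizing p with
  | zero => simpa using (V - W).norm_coe_le_norm p
  | succ n ih =>
    rw [iterate_succ_apply', iterate_succ_apply', pow_succ', mul_assoc (K : ℝ)]
    refine norm_picardMap_sub_le hF hFb hFlip hFblip (continuousOn_extendByZero _)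
      (continuousOn_extendByZero _) (by positivity) (fun q hq => ?_) p.2
    simpa only [extendByZero_coe _ ⟨q, hq⟩] using ih ⟨q, hq⟩

theorem exists_contractingWith_picardOperator_iterate (hus : 0 ≤ us) (hubs : 0 ≤ ubs) {K : ℝ≥0}
    (hFlip : ∀ p ∈ Dset us ubs, LipschitzWith K (F p.1 p.2))
    (hFblip : ∀ p ∈ Dset us ubs, LipschitzWith K (Fb p.1 p.2)) :
    ∃ (n : ℕ) (c : ℝ≥0), ContractingWith c (picardOperator hF hFb hU₀ hUb₀)^[n] := by
  obtain ⟨n, hn⟩ := (FloorSemiring.tendsto_pow_div_factorial_atTop (K * (us + ubs))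
    |>.eventually (gt_mem_nhds zero_lt_one)).exists
  have hc : 0 ≤ (K * (us + ubs)) ^ n / n ! := by positivity
  refine ⟨n, ⟨_, hc⟩, hn, LipschitzWith.of_dist_le_mul fun V W => ?_⟩
  refine (ContinuousMap.dist_le (by positivity)).2 fun p => ?_
  obtain ⟨⟨hu₀, hu⟩, hv₀, hv⟩ := p.2
  rw [dist_eq_norm, dist_eq_norm]
  calc
    _ ≤ K ^ n * ‖V - W‖ * ((p.1.1 + p.1.2) ^ n / n !) :=
      norm_picardOperator_iterate_sub_apply_le hF hFb hU₀ hUb₀ hFlip hFblip V W n p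
    _ ≤ K ^ n * ‖V - W‖ * ((us + ubs) ^ n / n !) := by gcongr
    _ = (K * (us + ubs)) ^ n / n ! * ‖V - W‖ := by rw [mul_pow]; ring

end Operator

end Picard

/-- global existence and uniqueness for two-variable ODE systems.
If `F : D × 𝕏 → 𝕐` and `F̄ : D × 𝕏 → 𝕐̄` are continuous and uniformly Lipschitz in
`𝕏 = 𝕐 × 𝕐̄`, then for any continuous initial data `U₀ : [0,ū_*] → 𝕐`,
`Ū₀ : [0,u_*] → 𝕐̄` there exists a solution `(U,Ū)` of the two-variable ODE system with
data `(F, F̄, U₀, Ū₀)` on all of `D` (continuous, with continuous partial derivatives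
`∂U/∂u`, `∂Ū/∂ū`), and any two such solutions coincide on `D`. -/
theorem stmt_2 {Y Yb : Type*}
    [NormedAddCommGroup Y] [NormedSpace ℝ Y] [CompleteSpace Y]
    [NormedAddCommGroup Yb] [NormedSpace ℝ Yb] [CompleteSpace Yb]
    (us ubs : ℝ) (hus : 0 < us) (hubs : 0 < ubs)
    (F : ℝ → ℝ → Y × Yb → Y) (Fb : ℝ → ℝ → Y × Yb → Yb)
    (hFc : ContinuousOn (fun q : (ℝ × ℝ) × Y × Yb => F q.1.1 q.1.2 q.2)
      (Dset us ubs ×ˢ univ))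
    (hFbc : ContinuousOn (fun q : (ℝ × ℝ) × Y × Yb => Fb q.1.1 q.1.2 q.2)
      (Dset us ubs ×ˢ univ))
    (M : ℝ) (hM : 0 ≤ M)
    (hFlip : ∀ p ∈ Dset us ubs, ∀ x₁ x₂ : Y × Yb,
      ‖F p.1 p.2 x₁ - F p.1 p.2 x₂‖ ≤ M * ‖x₁ - x₂‖)
    (hFblip : ∀ p ∈ Dset us ubs, ∀ x₁ x₂ : Y × Yb,
      ‖Fb p.1 p.2 x₁ - Fb p.1 p.2 x₂‖ ≤ M * ‖x₁ - x₂‖)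
    (U₀ : ℝ → Y) (Ub₀ : ℝ → Yb)
    (hU₀ : ContinuousOn U₀ (Set.Icc 0 ubs)) (hUb₀ : ContinuousOn Ub₀ (Set.Icc 0 us)) :
    (∃ U : ℝ × ℝ → Y, ∃ Ub : ℝ × ℝ → Yb, IsSolution us ubs F Fb U₀ Ub₀ U Ub) ∧
    (∀ U₁ Ub₁ U₂ Ub₂, IsSolution us ubs F Fb U₀ Ub₀ U₁ Ub₁ →
      IsSolution us ubs F Fb U₀ Ub₀ U₂ Ub₂ →
      ∀ p ∈ Dset us ubs, U₁ p = U₂ p ∧ Ub₁ p = Ub₂ p) := by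
  lift M to ℝ≥0 using hM
  have hFlip' (p) (hp : p ∈ Dset us ubs) : LipschitzWith M (F p.1 p.2) :=
    lipschitzWith_iff_norm_sub_le.2 (hFlip p hp)
  have hFblip' (p) (hp : p ∈ Dset us ubs) : LipschitzWith M (Fb p.1 p.2) :=
    lipschitzWith_iff_norm_sub_le.2 (hFblip p hp)
  obtain ⟨n, c, hcontr⟩ := exists_contractingWith_picardOperator_iterate
    hFc hFbc hU₀ hUb₀ hus.le hubs.le hFlip' hFblip'
  obtain ⟨V, hV, hunique⟩ := existsUnique_isFixedPt_of_contractingWith_iterate hcontr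
  simp only [isSolution_iff_exists_isFixedPt_picardOperator hFc hFbc hU₀ hUb₀ hus.le hubs.le]
  constructor
  · exact ⟨fun p => (extendByZero V p).1, fun p => (extendByZero V p).2, V, hV,
      fun p => (extendByZero_coe V p).symm⟩
  · rintro U₁ Ub₁ U₂ Ub₂ ⟨V₁, hV₁, hVU₁⟩ ⟨V₂, hV₂, hVU₂⟩ p hp
    have hV₁₂ : V₁ = V₂ := (hunique V₁ hV₁).trans (hunique V₂ hV₂).symm
    rw [← Prod.mk.injEq, ← hVU₁ ⟨p, hp⟩, ← hVU₂ ⟨p, hp⟩, hV₁₂]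
end

section
/- Suppose F : D × 𝕏 → 𝕐 and F̄ : D × 𝕏 → 𝕐̄ are continuous and uniformly Lipschitz in 𝕏, and suppose in addition that the partial derivative ∂F/∂ū, the partial Fréchet derivatives ∂F/∂U and ∂F/∂Ū (with respect to the 𝕐- and 𝕐̄-arguments), the partial derivative ∂F̄/∂u, and the partial Fréchet derivatives ∂F̄/∂U and ∂F̄/∂Ū all exist and are continuous on D × 𝕏. If the initial data U₀ : [0,ū_*] → 𝕐 and Ū₀ : [0,u_*] → 𝕐̄ are continuously differentiable, then the unique solution (U,Ū) of the two-variable ODE system with data (F, F̄, U₀, Ū₀) belongs to C¹(D; 𝕏); in particular ∂U/∂ū and ∂Ū/∂u exist and are continuous on D. -/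
open Set

/-
A map on a convex set is `C¹` iff its increments are `f y - f x = m (x, y) (y - x)` for a continuous
slope `m`: integrate the derivative along the segment, respectively restrict `m` to the diagonal.
Inserting the slopes of `F` and of `Ū` into the equation for `U` shows that, for two values `v, w`
of `ū`, the increment `U(·, w) - U(·, v)` solves a linear equation `Δ' = A Δ + B (w - v)` whose
coefficients are continuous in `(u, v, w)`. Hence it equals `V (w - v)`, where `V` solves the
operator equation `V' = A V + B` and is continuous in `(u, v, w)`, and so `V` is a continuous slope
of `U` in the variable `ū`. The claim for `Ū` follows by exchanging the roles of the two variables.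
-/

section Picard

variable {E : Type*} [NormedAddCommGroup E] [NormedSpace ℝ E]

lemma integral_exp_const_mul_le {l : ℝ} (hl : 0 < l) (a t : ℝ) :
    ∫ s in a..t, Real.exp (l * s) ≤ Real.exp (l * t) / l := by
  rw [intervalIntegral.integral_comp_mul_left _ hl.ne', integral_exp, smul_eq_mul, ← div_eq_inv_mul]
  gcongr
  exact sub_le_self _ (Real.exp_pos _).le

lemma norm_picard_sub_picard_le {f : ℝ → E → E} {α β : ℝ → E} {a t l d : ℝ} {K : NNReal} (x : E)
    (hat : a ≤ t) (hl : 0 < l)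
    (hf : ∀ s ∈ Icc a t, LipschitzWith K (f s))
    (hα : ContinuousOn (fun s => f s (α s)) (Icc a t))
    (hβ : ContinuousOn (fun s => f s (β s)) (Icc a t))
    (hαβ : ∀ s ∈ Icc a t, ‖α s - β s‖ ≤ Real.exp (l * s) * d) :
    ‖ODE.picard f a x α t - ODE.picard f a x β t‖ ≤ Real.exp (l * t) * (K / l * d) := by
  have hd : 0 ≤ d := nonneg_of_mul_nonneg_right
    ((norm_nonneg _).trans (hαβ a (left_mem_Icc.2 hat))) (Real.exp_pos _)
  have pointwise : ∀ s ∈ Ioc a t, ‖f s (α s) - f s (β s)‖ ≤ K * d * Real.exp (l * s) := by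
    intro s hs
    calc ‖f s (α s) - f s (β s)‖
        ≤ K * ‖α s - β s‖ := (hf s (Ioc_subset_Icc_self hs)).norm_sub_le _ _
      _ ≤ K * (Real.exp (l * s) * d) := by gcongr; exact hαβ s (Ioc_subset_Icc_self hs)
      _ = K * d * Real.exp (l * s) := by ring
  rw [ODE.picard_apply, ODE.picard_apply, add_sub_add_left_eq_sub, ← intervalIntegral.integral_sub
    (hα.intervalIntegrable_of_Icc hat) (hβ.intervalIntegrable_of_Icc hat)]
  calc ‖∫ s in a..t, f s (α s) - f s (β s)‖
      ≤ ∫ s in a..t, K * d * Real.exp (l * s) :=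
        intervalIntegral.norm_integral_le_of_norm_le hat
          (.of_forall fun s hs => pointwise s hs)
          (Continuous.intervalIntegrable (by fun_prop) _ _)
    _ = K * d * ∫ s in a..t, Real.exp (l * s) := intervalIntegral.integral_const_mul _ _
    _ ≤ K * d * (Real.exp (l * t) / l) := by gcongr; exact integral_exp_const_mul_le hl a t
    _ = Real.exp (l * t) * (K / l * d) := by ring

variable {P : Type*} [TopologicalSpace P] {a b : ℝ}

/-- The Picard operator of the family of equations `x' = f (t, p, x)`, `x a = c p`, conjugated by
the weight `exp (l * t)`: the map `W` stands for the curves `t ↦ exp (l * t) • W (t, p)`, so that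
the sup norm of `W` is Bielecki's weighted norm of these curves, for which Picard iteration
contracts on the whole interval. -/
noncomputable def weightedPicard (hab : a ≤ b) (l : ℝ) (f : C(Icc a b × P × E, E)) (c : C(P, E))
    (W : C(Icc a b × P, E)) : C(Icc a b × P, E) where
  toFun q := Real.exp (-(l * q.1)) •
    ODE.picard (fun s x => f (projIcc a b hab s, q.2, x)) a (c q.2)
      (fun s => Real.exp (l * s) • W (projIcc a b hab s, q.2)) q.1
  continuous_toFun := by
    have : Continuous fun q : Icc a b × P => ∫ s in a..q.1,
        f (projIcc a b hab s, q.2, Real.exp (l * s) • W (projIcc a b hab s, q.2)) :=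
      intervalIntegral.continuous_parametric_intervalIntegral_of_continuous
        (by simp only [Function.uncurry_def]; fun_prop) (by fun_prop)
    simp only [ODE.picard_apply]
    fun_prop

lemma contractingWith_weightedPicard [CompactSpace P] (hab : a ≤ b) {K : NNReal}
    {f : C(Icc a b × P × E, E)} (hf : ∀ t p, LipschitzWith K fun x => f (t, p, x)) (c : C(P, E)) :
    ContractingWith (K / (K + 1)) (weightedPicard hab (K + 1) f c) := by
  refine ⟨(div_lt_one (by positivity)).2 (lt_add_one K), .of_dist_le_mul fun W₁ W₂ => ?_⟩
  rw [ContinuousMap.dist_le (by positivity)]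
  rintro ⟨t, p⟩
  have hpicard := norm_picard_sub_picard_le
    (f := fun s x => f (projIcc a b hab s, p, x)) (l := K + 1) (d := dist W₁ W₂)
    (α := fun s => Real.exp ((K + 1) * s) • W₁ (projIcc a b hab s, p))
    (β := fun s => Real.exp ((K + 1) * s) • W₂ (projIcc a b hab s, p))
    (c p) t.2.1 (by positivity)
    (fun s _ => hf _ p) (by fun_prop) (by fun_prop) fun s _ => by
      rw [← smul_sub, norm_smul, Real.norm_of_nonneg (Real.exp_pos _).le, ← dist_eq_norm]
      gcongr
      exact ContinuousMap.dist_apply_le_dist _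
  calc dist (weightedPicard hab (K + 1) f c W₁ (t, p)) (weightedPicard hab (K + 1) f c W₂ (t, p))
      ≤ Real.exp (-((K + 1) * t)) * (Real.exp ((K + 1) * t) * (K / (K + 1) * dist W₁ W₂)) := by
        rw [dist_eq_norm]
        simp only [weightedPicard, ContinuousMap.coe_mk]
        rw [← smul_sub, norm_smul, Real.norm_of_nonneg (Real.exp_pos _).le]
        gcongr
    _ = (K / (K + 1) : NNReal) * dist W₁ W₂ := by
        rw [← mul_assoc, ← Real.exp_add, neg_add_cancel, Real.exp_zero, one_mul]
        push_cast
        rfl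

lemma exists_continuousMap_forall_eq_picard [CompactSpace P] [CompleteSpace E] (hab : a ≤ b)
    {K : NNReal} {f : C(Icc a b × P × E, E)} (hf : ∀ t p, LipschitzWith K fun x => f (t, p, x))
    (c : C(P, E)) :
    ∃ V : C(Icc a b × P, E), ∀ t p, V (t, p) =
      ODE.picard (fun s x => f (projIcc a b hab s, p, x)) a (c p)
        (fun s => V (projIcc a b hab s, p)) t := by
  have hT := contractingWith_weightedPicard hab hf c
  let W := hT.fixedPoint
  refine ⟨⟨fun q => Real.exp ((K + 1) * q.1) • W q, by fun_prop⟩, fun t p => ?_⟩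
  have hW : W (t, p) = weightedPicard hab (K + 1) f c W (t, p) :=
    (DFunLike.congr_fun hT.fixedPoint_isFixedPt (t, p)).symm
  simp only [weightedPicard, ContinuousMap.coe_mk] at hW
  simp only [ContinuousMap.coe_mk]
  rw [hW, smul_smul, ← Real.exp_add, add_neg_cancel, Real.exp_zero, one_smul]
  refine congrArg (c p + ·) (intervalIntegral.integral_congr fun s hs => ?_)
  rw [uIcc_of_le t.2.1] at hs
  simp only [projIcc_of_mem hab (Icc_subset_Icc_right t.2.2 hs)]

lemma exists_continuousMap_forall_hasDerivWithinAt [CompactSpace P] [CompleteSpace E]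
    (hab : a ≤ b) {K : NNReal} {f : C(Icc a b × P × E, E)}
    (hf : ∀ t p, LipschitzWith K fun x => f (t, p, x)) (c : C(P, E)) :
    ∃ V : C(Icc a b × P, E), ∀ p, V (projIcc a b hab a, p) = c p ∧ ∀ t : Icc a b,
      HasDerivWithinAt (fun s => V (projIcc a b hab s, p)) (f (t, p, V (t, p))) (Icc a b) t := by
  obtain ⟨V, hV⟩ := exists_continuousMap_forall_eq_picard hab hf c
  refine ⟨V, fun p => ⟨?_, fun t => ?_⟩⟩
  · rw [hV, projIcc_left, ODE.picard_apply₀]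
  · have hpicard := ODE.hasDerivWithinAt_picard_Icc (left_mem_Icc.2 hab) (u := univ)
      (f := fun s x => f (projIcc a b hab s, p, x)) (α := fun s => V (projIcc a b hab s, p))
      (by simp only [Function.uncurry_def]; fun_prop) (by fun_prop) (fun _ _ => mem_univ _)
      (c p) t.2
    simp only [projIcc_val] at hpicard
    refine hpicard.congr_of_mem (fun s hs => ?_) t.2
    rw [projIcc_of_mem hab hs, hV]

theorem exists_continuousOn_forall_hasDerivWithinAt [CompleteSpace E] (hab : a ≤ b) {K : NNReal}
    {S : Set P} (hS : IsCompact S) {f : ℝ → P → E → E} {c : P → E}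
    (hf : ContinuousOn (fun q : ℝ × P × E => f q.1 q.2.1 q.2.2) (Icc a b ×ˢ S ×ˢ univ))
    (hfK : ∀ t ∈ Icc a b, ∀ p ∈ S, LipschitzWith K (f t p)) (hc : ContinuousOn c S) :
    ∃ V : ℝ × P → E, ContinuousOn V (Icc a b ×ˢ S) ∧ ∀ p ∈ S, V (a, p) = c p ∧
      ∀ t ∈ Icc a b, HasDerivWithinAt (fun s => V (s, p)) (f t p (V (t, p))) (Icc a b) t := by
  classical
  have := isCompact_iff_compactSpace.1 hS
  let f' : C(Icc a b × S × E, E) := ⟨fun q => f q.1 q.2.1 q.2.2,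
    hf.comp_continuous (f := fun q : Icc a b × S × E => ((q.1 : ℝ), (q.2.1 : P), q.2.2))
      (by fun_prop) fun q => ⟨q.1.2, q.2.1.2, mem_univ _⟩⟩
  obtain ⟨V, hV⟩ := exists_continuousMap_forall_hasDerivWithinAt hab (f := f')
    (fun t p => hfK t t.2 p p.2) ⟨S.domRestrict c, hc.domRestrict⟩
  let V' : ℝ × P → E := fun q => if h : q.2 ∈ S then V (projIcc a b hab q.1, ⟨q.2, h⟩) else 0
  have hV' {p : P} (hp : p ∈ S) (t : ℝ) : V' (t, p) = V (projIcc a b hab t, ⟨p, hp⟩) := dif_pos hp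
  refine ⟨V', ?_, fun p hp => ⟨(hV' hp a).trans (hV ⟨p, hp⟩).1, fun t ht => ?_⟩⟩
  · rw [continuousOn_iff_continuous_domRestrict]
    have hVc : Continuous fun q : ↥(Icc a b ×ˢ S) =>
        V (projIcc a b hab q.1.1, ⟨q.1.2, q.2.2⟩) := by fun_prop
    exact hVc.congr fun q => (hV' q.2.2 q.1.1).symm
  · simp only [hV' hp, projIcc_of_mem hab ht]
    exact (hV ⟨p, hp⟩).2 ⟨t, ht⟩

end Picard

lemma continuousOn_map_pair {Q X E : Type*} [TopologicalSpace Q] [TopologicalSpace X]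
    [TopologicalSpace E] {T : Set Q} {C : Set X} {g : Q → X → E}
    (hg : ContinuousOn (fun p : Q × X => g p.1 p.2) (T ×ˢ C)) :
    ContinuousOn (fun p : Q × X × X => (p.1, g p.1 p.2.1, g p.1 p.2.2)) (T ×ˢ C ×ˢ C) :=
  continuousOn_fst.prodMk <|
    (hg.comp (f := fun p : Q × X × X => (p.1, p.2.1)) (by fun_prop)
      fun _ hp => ⟨hp.1, hp.2.1⟩).prodMk
    (hg.comp (f := fun p : Q × X × X => (p.1, p.2.2)) (by fun_prop)
      fun _ hp => ⟨hp.1, hp.2.2⟩)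

section Slope

variable {Q X X₁ X₂ E E₁ E₂ : Type*} [TopologicalSpace Q]
  [NormedAddCommGroup X] [NormedSpace ℝ X] [NormedAddCommGroup X₁] [NormedSpace ℝ X₁]
  [NormedAddCommGroup X₂] [NormedSpace ℝ X₂] [NormedAddCommGroup E] [NormedSpace ℝ E]
  [NormedAddCommGroup E₁] [NormedSpace ℝ E₁] [NormedAddCommGroup E₂] [NormedSpace ℝ E₂]
  {T : Set Q} {C : Set X} {C₁ : Set X₁} {C₂ : Set X₂}

/-- The family of maps `f q`, `q ∈ T`, has increments `f q y - f q x = m (q, x, y) (y - x)` on `C`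
for an operator-valued slope `m` which is continuous jointly in the parameter and both points.
On a convex set `C` this amounts to `f q` being `C¹` on `C` with derivative continuous in `(q, x)`:
the derivative is the slope on the diagonal, a slope is the mean of the derivative over the segment
from `x` to `y`. -/
def HasContinuousSlopeOn (f : Q → X → E) (T : Set Q) (C : Set X) : Prop :=
  ∃ m : Q × X × X → X →L[ℝ] E, ContinuousOn m (T ×ˢ C ×ˢ C) ∧
    ∀ q ∈ T, ∀ x ∈ C, ∀ y ∈ C, f q y - f q x = m (q, x, y) (y - x)

lemma continuousOn_integral_lineMap {F : Type*} [NormedAddCommGroup F] [NormedSpace ℝ F]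
    {φ : Q × X → F} (hC : Convex ℝ C) (hφ : ContinuousOn φ (T ×ˢ C)) :
    ContinuousOn (fun p : Q × X × X => ∫ r in (0 : ℝ)..1, φ (p.1, AffineMap.lineMap p.2.1 p.2.2 r))
      (T ×ˢ C ×ˢ C) := by
  rw [continuousOn_iff_continuous_domRestrict]
  have hmem (p : ↥(T ×ˢ C ×ˢ C)) (r : ℝ) :
      (p.1.1, AffineMap.lineMap p.1.2.1 p.1.2.2 (projIcc (0 : ℝ) 1 zero_le_one r : ℝ)) ∈ T ×ˢ C :=
    ⟨p.2.1, hC.lineMap_mem p.2.2.1 p.2.2.2 (projIcc _ _ _ r).2⟩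
  have hint := intervalIntegral.continuous_parametric_intervalIntegral_of_continuous'
    (μ := MeasureTheory.volume) (f := fun (p : ↥(T ×ˢ C ×ˢ C)) r => φ (p.1.1,
      AffineMap.lineMap p.1.2.1 p.1.2.2 (projIcc (0 : ℝ) 1 zero_le_one r : ℝ)))
    (hφ.comp_continuous (by simp only [AffineMap.lineMap_apply_module]; fun_prop)
      fun z => hmem z.1 z.2) 0 1
  refine hint.congr fun p => intervalIntegral.integral_congr fun r hr => ?_
  rw [uIcc_of_le zero_le_one] at hr
  simp only [projIcc_of_mem zero_le_one hr]

lemma sub_eq_integral_fderiv_lineMap [CompleteSpace E] {f : X → E} {f' : X → X →L[ℝ] E}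
    (hC : Convex ℝ C) (hf : ∀ x ∈ C, HasFDerivWithinAt f (f' x) C x) (hf' : ContinuousOn f' C)
    {x y : X} (hx : x ∈ C) (hy : y ∈ C) :
    f y - f x = (∫ r in (0 : ℝ)..1, f' (AffineMap.lineMap x y r)) (y - x) := by
  have hmem : MapsTo (AffineMap.lineMap x y) (Icc (0 : ℝ) 1) C :=
    fun r hr => hC.lineMap_mem hx hy hr
  have hline : ContinuousOn (AffineMap.lineMap x y : ℝ → X) (Icc 0 1) :=
    AffineMap.lineMap_continuous.continuousOn
  have hf'_line : ContinuousOn (fun r : ℝ => f' (AffineMap.lineMap x y r)) (Icc 0 1) :=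
    hf'.comp hline hmem
  have hderiv : ∀ r ∈ Icc (0 : ℝ) 1, HasDerivWithinAt (fun r => f (AffineMap.lineMap x y r))
      (f' (AffineMap.lineMap x y r) (y - x)) (Icc 0 1) r := fun r hr =>
    (hf _ (hmem hr)).comp_hasDerivWithinAt r AffineMap.hasDerivWithinAt_lineMap hmem
  rw [ContinuousLinearMap.intervalIntegral_apply
    (hf'_line.intervalIntegrable_of_Icc zero_le_one),
    intervalIntegral.integral_eq_sub_of_hasDerivAt_of_le zero_le_one
      (fun r hr => (hderiv r hr).continuousWithinAt)
      (fun r hr => (hderiv r (Ioo_subset_Icc_self hr)).hasDerivAt (Icc_mem_nhds hr.1 hr.2))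
      ((hf'_line.clm_apply continuousOn_const).intervalIntegrable_of_Icc zero_le_one)]
  simp only [AffineMap.lineMap_apply_one, AffineMap.lineMap_apply_zero]

theorem hasContinuousSlopeOn_of_hasFDerivWithinAt [CompleteSpace E] {f : Q → X → E}
    {f' : Q × X → X →L[ℝ] E} (hC : Convex ℝ C)
    (hf : ∀ q ∈ T, ∀ x ∈ C, HasFDerivWithinAt (f q) (f' (q, x)) C x)
    (hf' : ContinuousOn f' (T ×ˢ C)) : HasContinuousSlopeOn f T C :=
  ⟨_, continuousOn_integral_lineMap hC hf', fun q hq _ hx _ hy =>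
    sub_eq_integral_fderiv_lineMap (f' := fun x => f' (q, x)) hC (hf q hq)
      (hf'.comp (by fun_prop) fun _ hx => ⟨hq, hx⟩) hx hy⟩

theorem hasContinuousSlopeOn_of_hasDerivWithinAt [CompleteSpace E] {f : Q → ℝ → E}
    {f' : Q × ℝ → E} {C : Set ℝ} (hC : Convex ℝ C)
    (hf : ∀ q ∈ T, ∀ x ∈ C, HasDerivWithinAt (f q) (f' (q, x)) C x)
    (hf' : ContinuousOn f' (T ×ˢ C)) : HasContinuousSlopeOn f T C :=
  hasContinuousSlopeOn_of_hasFDerivWithinAt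
    (f' := fun p => ContinuousLinearMap.toSpanSingleton ℝ (f' p)) hC
    (fun q hq x hx => (hf q hq x hx).hasFDerivWithinAt)
    ((ContinuousLinearMap.toSpanSingletonLIE ℝ E).continuous.comp_continuousOn hf')

lemma hasContinuousSlopeOn_clm (L : X →L[ℝ] E) :
    HasContinuousSlopeOn (fun _ : Q => L) T C :=
  ⟨fun _ => L, continuousOn_const, fun _ _ x _ y _ => (map_sub L y x).symm⟩

namespace HasContinuousSlopeOn

lemma exists_hasFDerivWithinAt {f : Q → X → E} (hf : HasContinuousSlopeOn f T C) :
    ∃ f' : Q × X → X →L[ℝ] E, ContinuousOn f' (T ×ˢ C) ∧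
      ∀ q ∈ T, ∀ x ∈ C, HasFDerivWithinAt (f q) (f' (q, x)) C x := by
  obtain ⟨m, hm, hfm⟩ := hf
  refine ⟨fun p => m (p.1, p.2, p.2), hm.comp (by fun_prop) fun p hp => ⟨hp.1, hp.2, hp.2⟩,
    fun q hq x hx => ?_⟩
  have hm_x : ContinuousOn (fun y => m (q, x, y)) C :=
    hm.comp (by fun_prop) fun y hy => ⟨hq, hx, hy⟩
  refine .of_isLittleO (Asymptotics.isLittleO_iff.2 fun ε hε => ?_)
  filter_upwards [self_mem_nhdsWithin, (hm_x x hx).eventually (Metric.ball_mem_nhds _ hε)]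
    with y hy hclose
  rw [hfm q hq x hx y hy, ← sub_apply]
  exact (ContinuousLinearMap.le_opNorm _ _).trans (by gcongr; exact (mem_ball_iff_norm.1 hclose).le)

lemma exists_hasDerivWithinAt {f : Q → ℝ → E} {C : Set ℝ} (hf : HasContinuousSlopeOn f T C) :
    ∃ f' : Q × ℝ → E, ContinuousOn f' (T ×ˢ C) ∧
      ∀ q ∈ T, ∀ x ∈ C, HasDerivWithinAt (f q) (f' (q, x)) C x := by
  obtain ⟨f', hf', hff'⟩ := hf.exists_hasFDerivWithinAt
  exact ⟨fun p => f' p 1, hf'.clm_apply continuousOn_const,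
    fun q hq x hx => (hff' q hq x hx).hasDerivWithinAt⟩

lemma comp {f : Q → X → E} {g : Q → X₁ → X} (hf : HasContinuousSlopeOn f T C)
    (hg : HasContinuousSlopeOn g T C₁)
    (hgc : ContinuousOn (fun p : Q × X₁ => g p.1 p.2) (T ×ˢ C₁))
    (hgC : ∀ q ∈ T, MapsTo (g q) C₁ C) :
    HasContinuousSlopeOn (fun q x => f q (g q x)) T C₁ := by
  obtain ⟨m, hm, hfm⟩ := hf
  obtain ⟨n, hn, hgn⟩ := hg
  refine ⟨fun p => (m (p.1, g p.1 p.2.1, g p.1 p.2.2)).comp (n p), ?_, fun q hq x hx y hy => ?_⟩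
  · exact (hm.comp (continuousOn_map_pair hgc) fun p hp =>
      ⟨hp.1, hgC _ hp.1 hp.2.1, hgC _ hp.1 hp.2.2⟩).clm_comp hn
  · rw [hfm q hq _ (hgC q hq hx) _ (hgC q hq hy), hgn q hq x hx y hy,
      ContinuousLinearMap.comp_apply]

lemma prodMk {f : Q → X → E₁} {g : Q → X → E₂} (hf : HasContinuousSlopeOn f T C)
    (hg : HasContinuousSlopeOn g T C) : HasContinuousSlopeOn (fun q x => (f q x, g q x)) T C := by
  obtain ⟨m, hm, hfm⟩ := hf
  obtain ⟨n, hn, hgn⟩ := hg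
  refine ⟨fun p => (m p).prod (n p), ?_, fun q hq x hx y hy => ?_⟩
  · exact (ContinuousLinearMap.prodₗᵢ ℝ).continuous.comp_continuousOn (hm.prodMk hn)
  · rw [Prod.mk_sub_mk, hfm q hq x hx y hy, hgn q hq x hx y hy, ContinuousLinearMap.prod_apply]

lemma of_partial {f : Q → X₁ × X₂ → E}
    (h₁ : HasContinuousSlopeOn (fun (p : Q × X₂) x₁ => f p.1 (x₁, p.2)) (T ×ˢ C₂) C₁)
    (h₂ : HasContinuousSlopeOn (fun (p : Q × X₁) x₂ => f p.1 (p.2, x₂)) (T ×ˢ C₁) C₂) :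
    HasContinuousSlopeOn f T (C₁ ×ˢ C₂) := by
  obtain ⟨m₁, hm₁, hfm₁⟩ := h₁
  obtain ⟨m₂, hm₂, hfm₂⟩ := h₂
  refine ⟨fun p => (m₁ ((p.1, p.2.2.2), p.2.1.1, p.2.2.1)).coprod
    (m₂ ((p.1, p.2.1.1), p.2.1.2, p.2.2.2)), ?_, ?_⟩
  · have hc₁ : ContinuousOn (fun p : Q × (X₁ × X₂) × X₁ × X₂ =>
        m₁ ((p.1, p.2.2.2), p.2.1.1, p.2.2.1)) (T ×ˢ (C₁ ×ˢ C₂) ×ˢ C₁ ×ˢ C₂) :=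
      hm₁.comp (by fun_prop) fun p hp => ⟨⟨hp.1, hp.2.2.2⟩, hp.2.1.1, hp.2.2.1⟩
    have hc₂ : ContinuousOn (fun p : Q × (X₁ × X₂) × X₁ × X₂ =>
        m₂ ((p.1, p.2.1.1), p.2.1.2, p.2.2.2)) (T ×ˢ (C₁ ×ˢ C₂) ×ˢ C₁ ×ˢ C₂) :=
      hm₂.comp (by fun_prop) fun p hp => ⟨⟨hp.1, hp.2.1.1⟩, hp.2.1.2, hp.2.2.2⟩
    exact (ContinuousLinearMap.coprodEquivL ℝ).continuous.comp_continuousOn (hc₁.prodMk hc₂)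
  · rintro q hq ⟨x₁, x₂⟩ ⟨hx₁, hx₂⟩ ⟨y₁, y₂⟩ ⟨hy₁, hy₂⟩
    calc f q (y₁, y₂) - f q (x₁, x₂)
        = (f q (y₁, y₂) - f q (x₁, y₂)) + (f q (x₁, y₂) - f q (x₁, x₂)) := by abel
      _ = _ := by
        rw [hfm₁ (q, y₂) ⟨hq, hy₂⟩ x₁ hx₁ y₁ hy₁, hfm₂ (q, x₁) ⟨hq, hx₁⟩ x₂ hx₂ y₂ hy₂,
          ContinuousLinearMap.coprod_apply, Prod.mk_sub_mk]

theorem of_partial_hasFDerivWithinAt [CompleteSpace E] {f : Q → X₁ × X₂ → E}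
    {f₁ : Q × X₁ × X₂ → X₁ →L[ℝ] E} {f₂ : Q × X₁ × X₂ → X₂ →L[ℝ] E}
    (hC₁ : Convex ℝ C₁) (hC₂ : Convex ℝ C₂)
    (h₁ : ∀ q ∈ T, ∀ x ∈ C₁ ×ˢ C₂,
      HasFDerivWithinAt (fun x₁ => f q (x₁, x.2)) (f₁ (q, x)) C₁ x.1)
    (hf₁ : ContinuousOn f₁ (T ×ˢ C₁ ×ˢ C₂))
    (h₂ : ∀ q ∈ T, ∀ x ∈ C₁ ×ˢ C₂,
      HasFDerivWithinAt (fun x₂ => f q (x.1, x₂)) (f₂ (q, x)) C₂ x.2)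
    (hf₂ : ContinuousOn f₂ (T ×ˢ C₁ ×ˢ C₂)) : HasContinuousSlopeOn f T (C₁ ×ˢ C₂) :=
  of_partial
    (hasContinuousSlopeOn_of_hasFDerivWithinAt (f' := fun p => f₁ (p.1.1, p.2, p.1.2)) hC₁
      (fun p hp x₁ hx₁ => h₁ p.1 hp.1 (x₁, p.2) ⟨hx₁, hp.2⟩)
      (hf₁.comp (by fun_prop) fun _ hp => ⟨hp.1.1, hp.2, hp.1.2⟩))
    (hasContinuousSlopeOn_of_hasFDerivWithinAt (f' := fun p => f₂ (p.1.1, p.1.2, p.2)) hC₂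
      (fun p hp x₂ hx₂ => h₂ p.1 hp.1 (p.2, x₂) ⟨hp.2, hx₂⟩)
      (hf₂.comp (by fun_prop) fun _ hp => ⟨hp.1.1, hp.1.2, hp.2⟩))

lemma comp_graph {f : Q → X × X₁ × X₂ → E} {W : Q → X → X₂}
    (hf : HasContinuousSlopeOn f T (C ×ˢ univ)) (hW : HasContinuousSlopeOn W T C)
    (hWc : ContinuousOn (fun p : Q × X => W p.1 p.2) (T ×ˢ C)) :
    HasContinuousSlopeOn (fun q (p : X × X₁) => f q (p.1, p.2, W q p.1)) T (C ×ˢ univ) := by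
  have hfst : HasContinuousSlopeOn (fun _ : Q => Prod.fst) T (C ×ˢ (univ : Set X₁)) :=
    hasContinuousSlopeOn_clm (.fst ℝ X X₁)
  have hsnd : HasContinuousSlopeOn (fun _ : Q => Prod.snd) T (C ×ˢ (univ : Set X₁)) :=
    hasContinuousSlopeOn_clm (.snd ℝ X X₁)
  have hW_fst := hW.comp hfst (by fun_prop) fun _ _ _ hp => hp.1
  have hWc_fst : ContinuousOn (fun p : Q × X × X₁ => W p.1 p.2.1) (T ×ˢ C ×ˢ univ) :=
    hWc.comp (f := fun p : Q × X × X₁ => (p.1, p.2.1)) (by fun_prop) fun _ hp => ⟨hp.1, hp.2.1⟩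
  exact hf.comp (hfst.prodMk (hsnd.prodMk hW_fst))
    (continuousOn_snd.fst.prodMk (continuousOn_snd.snd.prodMk hWc_fst))
    fun _ _ _ hp => ⟨hp.1, mem_univ _⟩

end HasContinuousSlopeOn

end Slope

section LinearODE

variable {P X Y : Type*} [TopologicalSpace P] [NormedAddCommGroup X] [NormedSpace ℝ X]
  [NormedAddCommGroup Y] [NormedSpace ℝ Y] {a b : ℝ}

lemma lipschitzWith_clm_comp_add {A : Y →L[ℝ] Y} {K : NNReal} (hA : ‖A‖₊ ≤ K) (B : X →L[ℝ] Y) :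
    LipschitzWith K fun V : X →L[ℝ] Y => A.comp V + B := by
  refine .of_dist_le_mul fun V₁ V₂ => ?_
  rw [dist_add_right, dist_eq_norm, dist_eq_norm, ← ContinuousLinearMap.comp_sub]
  exact (A.opNorm_comp_le _).trans (by gcongr; exact hA)

lemma lipschitzWith_clm_add {A : Y →L[ℝ] Y} {K : NNReal} (hA : ‖A‖₊ ≤ K) (w : Y) :
    LipschitzWith K fun y => A y + w := by
  refine .of_dist_le_mul fun y₁ y₂ => ?_
  rw [dist_add_right]
  exact (A.lipschitz.weaken hA).dist_le_mul y₁ y₂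

lemma exists_continuousOn_operator_solution [CompleteSpace Y] (hab : a ≤ b) {S : Set P}
    (hS : IsCompact S) {A : ℝ × P → Y →L[ℝ] Y} {B : ℝ × P → X →L[ℝ] Y} {c : P → X →L[ℝ] Y}
    (hA : ContinuousOn A (Icc a b ×ˢ S)) (hB : ContinuousOn B (Icc a b ×ˢ S))
    (hc : ContinuousOn c S) :
    ∃ V : ℝ × P → X →L[ℝ] Y, ContinuousOn V (Icc a b ×ˢ S) ∧ ∀ p ∈ S, V (a, p) = c p ∧
      ∀ t ∈ Icc a b, HasDerivWithinAt (fun s => V (s, p))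
        ((A (t, p)).comp (V (t, p)) + B (t, p)) (Icc a b) t := by
  obtain ⟨K, hK⟩ := (isCompact_Icc.prod hS).bddAbove_image hA.nnnorm
  have hproj : MapsTo (fun q : ℝ × P × (X →L[ℝ] Y) => (q.1, q.2.1)) (Icc a b ×ˢ S ×ˢ univ)
      (Icc a b ×ˢ S) := fun q hq => ⟨hq.1, hq.2.1⟩
  refine exists_continuousOn_forall_hasDerivWithinAt hab hS
    (f := fun t p V => (A (t, p)).comp V + B (t, p)) ?_
    (fun t ht p hp => lipschitzWith_clm_comp_add (hK (mem_image_of_mem _ ⟨ht, hp⟩)) _) hc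
  exact ((hA.comp (by fun_prop) hproj).clm_comp (by fun_prop)).add (hB.comp (by fun_prop) hproj)

lemma eq_operator_solution_apply {A : ℝ → Y →L[ℝ] Y} {B V : ℝ → X →L[ℝ] Y} {x : ℝ → Y} {h : X}
    (hA : ContinuousOn A (Icc a b))
    (hV : ∀ t ∈ Icc a b, HasDerivWithinAt V ((A t).comp (V t) + B t) (Icc a b) t)
    (hx : ∀ t ∈ Icc a b, HasDerivWithinAt x (A t (x t) + B t h) (Icc a b) t)
    (hxV : x a = V a h) : ∀ t ∈ Icc a b, x t = V t h := by
  obtain ⟨K, hK⟩ := isCompact_Icc.bddAbove_image hA.nnnorm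
  have hVh : ∀ t ∈ Icc a b, HasDerivWithinAt (fun s => V s h) (A t (V t h) + B t h) (Icc a b) t :=
    fun t ht => by simpa using (hV t ht).clm_apply (hasDerivWithinAt_const t (Icc a b) h)
  have right_deriv {y : ℝ → Y} {t : ℝ} {y' : Y} (ht : t ∈ Ico a b)
      (hy : HasDerivWithinAt y y' (Icc a b) t) : HasDerivWithinAt y y' (Ici t) t :=
    hy.mono_of_mem_nhdsWithin (Icc_mem_nhdsGE_of_mem ht)
  exact ODE_solution_unique_of_mem_Icc_right (v := fun t y => A t y + B t h) (s := fun _ => univ)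
    (K := K) (fun t ht => (lipschitzWith_clm_add
      (hK (mem_image_of_mem _ (Ico_subset_Icc_self ht))) _).lipschitzOnWith)
    (fun t ht => (hx t ht).continuousWithinAt)
    (fun t ht => right_deriv ht (hx t (Ico_subset_Icc_self ht))) (fun _ _ => mem_univ _)
    (fun t ht => (hVh t ht).continuousWithinAt)
    (fun t ht => right_deriv ht (hVh t (Ico_subset_Icc_self ht))) (fun _ _ => mem_univ _) hxV

end LinearODE

section DependenceOnParameters

variable {X Y : Type*} [NormedAddCommGroup X] [NormedSpace ℝ X] [NormedAddCommGroup Y]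
  [NormedSpace ℝ Y] {a b : ℝ} {J : Set X} {f : ℝ → X × Y → Y} {U : ℝ → X → Y}

lemma exists_linear_ode_increment (hf : HasContinuousSlopeOn f (Icc a b) (J ×ˢ univ))
    (hUc : ContinuousOn (fun p : ℝ × X => U p.1 p.2) (Icc a b ×ˢ J))
    (hU : ∀ x ∈ J, ∀ t ∈ Icc a b,
      HasDerivWithinAt (fun s => U s x) (f t (x, U t x)) (Icc a b) t) :
    ∃ (A : ℝ × X × X → Y →L[ℝ] Y) (B : ℝ × X × X → X →L[ℝ] Y),
      ContinuousOn A (Icc a b ×ˢ J ×ˢ J) ∧ ContinuousOn B (Icc a b ×ˢ J ×ˢ J) ∧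
      ∀ x ∈ J, ∀ y ∈ J, ∀ t ∈ Icc a b, HasDerivWithinAt (fun s => U s y - U s x)
        (A (t, x, y) (U t y - U t x) + B (t, x, y) (y - x)) (Icc a b) t := by
  obtain ⟨m, hm, hfm⟩ := hf
  have hm_graph : ContinuousOn
      (fun q : ℝ × X × X => m (q.1, (q.2.1, U q.1 q.2.1), (q.2.2, U q.1 q.2.2)))
      (Icc a b ×ˢ J ×ˢ J) :=
    hm.comp (continuousOn_map_pair (g := fun t x => (x, U t x)) (continuousOn_snd.prodMk hUc))
      fun q hq => ⟨hq.1, ⟨hq.2.1, mem_univ _⟩, hq.2.2, mem_univ _⟩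
  refine ⟨fun q => (m (q.1, (q.2.1, U q.1 q.2.1), (q.2.2, U q.1 q.2.2))).comp (.inr ℝ X Y),
    fun q => (m (q.1, (q.2.1, U q.1 q.2.1), (q.2.2, U q.1 q.2.2))).comp (.inl ℝ X Y),
    hm_graph.clm_comp continuousOn_const, hm_graph.clm_comp continuousOn_const,
    fun x hx y hy t ht => ?_⟩
  refine ((hU y hy t ht).fun_sub (hU x hx t ht)).congr_deriv ?_
  rw [hfm t ht (x, U t x) ⟨hx, mem_univ _⟩ (y, U t y) ⟨hy, mem_univ _⟩, Prod.mk_sub_mk]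
  simp only [ContinuousLinearMap.comp_apply, ContinuousLinearMap.inl_apply,
    ContinuousLinearMap.inr_apply, ← map_add, Prod.mk_add_mk, zero_add, add_zero]

theorem hasContinuousSlopeOn_ode_solution [CompleteSpace Y] (hab : a ≤ b) (hJ : IsCompact J)
    (hf : HasContinuousSlopeOn f (Icc a b) (J ×ˢ univ))
    (hUc : ContinuousOn (fun p : ℝ × X => U p.1 p.2) (Icc a b ×ˢ J))
    (hU : ∀ x ∈ J, ∀ t ∈ Icc a b,
      HasDerivWithinAt (fun s => U s x) (f t (x, U t x)) (Icc a b) t)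
    (hUa : HasContinuousSlopeOn (fun _ : Unit => U a) univ J) :
    HasContinuousSlopeOn U (Icc a b) J := by
  obtain ⟨c, hc, hUac⟩ := hUa
  obtain ⟨A, B, hA, hB, hincrement⟩ := exists_linear_ode_increment hf hUc hU
  obtain ⟨V, hVc, hV⟩ := exists_continuousOn_operator_solution hab (hJ.prod hJ) hA hB
    (c := fun p => c ((), p)) (hc.comp (by fun_prop) fun p hp => ⟨mem_univ _, hp⟩)
  refine ⟨V, hVc, fun t ht x hx y hy => ?_⟩
  obtain ⟨hVa, hVd⟩ := hV (x, y) ⟨hx, hy⟩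
  refine eq_operator_solution_apply (A := fun s => A (s, x, y)) (B := fun s => B (s, x, y))
    (V := fun s => V (s, x, y)) (hA.comp (by fun_prop) fun s hs => ⟨hs, hx, hy⟩)
    hVd (hincrement x hx y hy) ?_ t ht
  rw [hVa, hUac () (mem_univ _) x hx y hy]

end DependenceOnParameters

section TwoVariableSystem

variable {Y Z : Type*} [NormedAddCommGroup Y] [NormedSpace ℝ Y]
  [NormedAddCommGroup Z] [NormedSpace ℝ Z]

lemma hasContinuousSlopeOn_of_partial_derivs [CompleteSpace Y] {a b c d : ℝ}
    {F F₂ : ℝ → ℝ → Y × Z → Y} {FY : ℝ → ℝ → Y × Z → Y →L[ℝ] Y} {FZ : ℝ → ℝ → Y × Z → Z →L[ℝ] Y}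
    (hF₂ : ∀ p ∈ Icc a b ×ˢ Icc c d, ∀ x : Y × Z,
      HasDerivWithinAt (fun v => F p.1 v x) (F₂ p.1 p.2 x) (Icc c d) p.2)
    (hF₂c : ContinuousOn (fun q : (ℝ × ℝ) × Y × Z => F₂ q.1.1 q.1.2 q.2)
      ((Icc a b ×ˢ Icc c d) ×ˢ univ))
    (hFY : ∀ p ∈ Icc a b ×ˢ Icc c d, ∀ x : Y × Z,
      HasFDerivAt (fun y => F p.1 p.2 (y, x.2)) (FY p.1 p.2 x) x.1)
    (hFYc : ContinuousOn (fun q : (ℝ × ℝ) × Y × Z => FY q.1.1 q.1.2 q.2)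
      ((Icc a b ×ˢ Icc c d) ×ˢ univ))
    (hFZ : ∀ p ∈ Icc a b ×ˢ Icc c d, ∀ x : Y × Z,
      HasFDerivAt (fun z => F p.1 p.2 (x.1, z)) (FZ p.1 p.2 x) x.2)
    (hFZc : ContinuousOn (fun q : (ℝ × ℝ) × Y × Z => FZ q.1.1 q.1.2 q.2)
      ((Icc a b ×ˢ Icc c d) ×ˢ univ)) :
    HasContinuousSlopeOn (fun t (q : ℝ × Y × Z) => F t q.1 q.2) (Icc a b) (Icc c d ×ˢ univ) := by
  have slope_snd : HasContinuousSlopeOn (fun (q : ℝ × Y × Z) v => F q.1 v q.2)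
      (Icc a b ×ˢ univ) (Icc c d) :=
    hasContinuousSlopeOn_of_hasDerivWithinAt (f' := fun q : (ℝ × Y × Z) × ℝ => F₂ q.1.1 q.2 q.1.2)
      (convex_Icc c d) (fun q hq v hv => hF₂ (q.1, v) ⟨hq.1, hv⟩ q.2)
      (hF₂c.comp (f := fun q : (ℝ × Y × Z) × ℝ => ((q.1.1, q.2), q.1.2)) (by fun_prop)
        fun q hq => ⟨⟨hq.1.1, hq.2⟩, mem_univ _⟩)
  have slope_YZ : HasContinuousSlopeOn (fun q : ℝ × ℝ => F q.1 q.2)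
      (Icc a b ×ˢ Icc c d) univ := by
    rw [← univ_prod_univ] at hFYc hFZc ⊢
    exact .of_partial_hasFDerivWithinAt convex_univ convex_univ
      (fun p hp x _ => (hFY p hp x).hasFDerivWithinAt) hFYc
      (fun p hp x _ => (hFZ p hp x).hasFDerivWithinAt) hFZc
  exact .of_partial slope_snd slope_YZ

namespace IsSolution

variable {us ubs : ℝ} {F : ℝ → ℝ → Y × Z → Y} {Fb : ℝ → ℝ → Y × Z → Z}
  {U₀ : ℝ → Y} {Ub₀ : ℝ → Z} {U : ℝ × ℝ → Y} {Ub : ℝ × ℝ → Z}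

lemma swap (h : IsSolution us ubs F Fb U₀ Ub₀ U Ub) :
    IsSolution ubs us (fun v u x => Fb u v x.swap) (fun v u x => F u v x.swap) Ub₀ U₀
      (fun p => Ub p.swap) (fun p => U p.swap) := by
  obtain ⟨hUc, hUbc, hU, hUb, hU₀, hUb₀⟩ := h
  have hswap : MapsTo Prod.swap (Dset ubs us) (Dset us ubs) := fun _ hp => ⟨hp.2, hp.1⟩
  exact ⟨hUbc.comp continuous_swap.continuousOn hswap, hUc.comp continuous_swap.continuousOn hswap,
    fun p hp => hUb p.swap (hswap hp), fun p hp => hU p.swap (hswap hp), hUb₀, hU₀⟩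

lemma continuousOn_comp {E : Type*} [TopologicalSpace E] {G : ℝ → ℝ → Y × Z → E}
    (h : IsSolution us ubs F Fb U₀ Ub₀ U Ub)
    (hG : ContinuousOn (fun q : (ℝ × ℝ) × Y × Z => G q.1.1 q.1.2 q.2) (Dset us ubs ×ˢ univ)) :
    ContinuousOn (fun p : ℝ × ℝ => G p.1 p.2 (U p, Ub p)) (Dset us ubs) :=
  hG.comp (continuousOn_id.prodMk (h.1.prodMk h.2.1)) fun _ hp => ⟨hp, mem_univ _⟩

theorem exists_continuousOn_hasDerivWithinAt_snd [CompleteSpace Y] [CompleteSpace Z]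
    (h : IsSolution us ubs F Fb U₀ Ub₀ U Ub) (hus : 0 ≤ us)
    (hF : HasContinuousSlopeOn (fun t (q : ℝ × Y × Z) => F t q.1 q.2)
      (Icc 0 us) (Icc 0 ubs ×ˢ univ))
    (hFb : ContinuousOn (fun q : (ℝ × ℝ) × Y × Z => Fb q.1.1 q.1.2 q.2) (Dset us ubs ×ˢ univ))
    {U₀' : ℝ → Y} (hU₀ : ∀ v ∈ Icc 0 ubs, HasDerivWithinAt U₀ (U₀' v) (Icc 0 ubs) v)
    (hU₀' : ContinuousOn U₀' (Icc 0 ubs)) :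
    ∃ g : ℝ × ℝ → Y, ContinuousOn g (Dset us ubs) ∧ ∀ p ∈ Dset us ubs,
      HasDerivWithinAt (fun v => U (p.1, v)) (g p) (Icc 0 ubs) p.2 := by
  have hFb_sol := h.continuousOn_comp hFb
  obtain ⟨hUc, hUbc, hU, hUb, hU_init, -⟩ := h
  have slope_Ub : HasContinuousSlopeOn (fun t v => Ub (t, v)) (Icc 0 us) (Icc 0 ubs) :=
    hasContinuousSlopeOn_of_hasDerivWithinAt (convex_Icc 0 ubs)
      (fun t ht v hv => hUb (t, v) ⟨ht, hv⟩) hFb_sol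
  have slope_init : HasContinuousSlopeOn (fun (_ : Unit) v => U (0, v)) univ (Icc 0 ubs) :=
    hasContinuousSlopeOn_of_hasDerivWithinAt (f' := fun q => U₀' q.2) (convex_Icc 0 ubs)
      (fun _ _ v hv => (hU₀ v hv).congr_of_mem hU_init hv)
      (hU₀'.comp continuousOn_snd fun _ hq => hq.2)
  have slope_U : HasContinuousSlopeOn (fun t v => U (t, v)) (Icc 0 us) (Icc 0 ubs) :=
    hasContinuousSlopeOn_ode_solution hus isCompact_Icc (hF.comp_graph slope_Ub hUbc) hUc
      (fun v hv t ht => hU (t, v) ⟨ht, hv⟩) slope_init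
  obtain ⟨g, hg, hUg⟩ := slope_U.exists_hasDerivWithinAt
  exact ⟨g, hg, fun p hp => hUg p.1 hp.1 p.2 hp.2⟩

end IsSolution

end TwoVariableSystem

theorem stmt_4_general {Y Yb : Type*}
    [NormedAddCommGroup Y] [NormedSpace ℝ Y] [CompleteSpace Y]
    [NormedAddCommGroup Yb] [NormedSpace ℝ Yb] [CompleteSpace Yb]
    (us ubs : ℝ) (hus : 0 < us) (hubs : 0 < ubs)
    (F : ℝ → ℝ → Y × Yb → Y) (Fb : ℝ → ℝ → Y × Yb → Yb)
    (hFc : ContinuousOn (fun q : (ℝ × ℝ) × Y × Yb => F q.1.1 q.1.2 q.2)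
      (Dset us ubs ×ˢ univ))
    (hFbc : ContinuousOn (fun q : (ℝ × ℝ) × Y × Yb => Fb q.1.1 q.1.2 q.2)
      (Dset us ubs ×ˢ univ))
    (Fub : ℝ → ℝ → Y × Yb → Y)
    (hFub : ∀ p ∈ Dset us ubs, ∀ x : Y × Yb,
      HasDerivWithinAt (fun v => F p.1 v x) (Fub p.1 p.2 x) (Icc 0 ubs) p.2)
    (hFubc : ContinuousOn (fun q : (ℝ × ℝ) × Y × Yb => Fub q.1.1 q.1.2 q.2)
      (Dset us ubs ×ˢ univ))
    (FU : ℝ → ℝ → Y × Yb → (Y →L[ℝ] Y))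
    (hFU : ∀ p ∈ Dset us ubs, ∀ x : Y × Yb,
      HasFDerivAt (fun y : Y => F p.1 p.2 (y, x.2)) (FU p.1 p.2 x) x.1)
    (hFUc : ContinuousOn (fun q : (ℝ × ℝ) × Y × Yb => FU q.1.1 q.1.2 q.2)
      (Dset us ubs ×ˢ univ))
    (FUb : ℝ → ℝ → Y × Yb → (Yb →L[ℝ] Y))
    (hFUb : ∀ p ∈ Dset us ubs, ∀ x : Y × Yb,
      HasFDerivAt (fun yb : Yb => F p.1 p.2 (x.1, yb)) (FUb p.1 p.2 x) x.2)
    (hFUbc : ContinuousOn (fun q : (ℝ × ℝ) × Y × Yb => FUb q.1.1 q.1.2 q.2)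
      (Dset us ubs ×ˢ univ))
    (Fbu : ℝ → ℝ → Y × Yb → Yb)
    (hFbu : ∀ p ∈ Dset us ubs, ∀ x : Y × Yb,
      HasDerivWithinAt (fun t => Fb t p.2 x) (Fbu p.1 p.2 x) (Icc 0 us) p.1)
    (hFbuc : ContinuousOn (fun q : (ℝ × ℝ) × Y × Yb => Fbu q.1.1 q.1.2 q.2)
      (Dset us ubs ×ˢ univ))
    (FbU : ℝ → ℝ → Y × Yb → (Y →L[ℝ] Yb))
    (hFbU : ∀ p ∈ Dset us ubs, ∀ x : Y × Yb,
      HasFDerivAt (fun y : Y => Fb p.1 p.2 (y, x.2)) (FbU p.1 p.2 x) x.1)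
    (hFbUc : ContinuousOn (fun q : (ℝ × ℝ) × Y × Yb => FbU q.1.1 q.1.2 q.2)
      (Dset us ubs ×ˢ univ))
    (FbUb : ℝ → ℝ → Y × Yb → (Yb →L[ℝ] Yb))
    (hFbUb : ∀ p ∈ Dset us ubs, ∀ x : Y × Yb,
      HasFDerivAt (fun yb : Yb => Fb p.1 p.2 (x.1, yb)) (FbUb p.1 p.2 x) x.2)
    (hFbUbc : ContinuousOn (fun q : (ℝ × ℝ) × Y × Yb => FbUb q.1.1 q.1.2 q.2)
      (Dset us ubs ×ˢ univ))
    (U₀ U₀' : ℝ → Y) (Ub₀ Ub₀' : ℝ → Yb)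
    (hU₀ : ∀ v ∈ Icc (0:ℝ) ubs, HasDerivWithinAt U₀ (U₀' v) (Icc 0 ubs) v)
    (hU₀' : ContinuousOn U₀' (Icc 0 ubs))
    (hUb₀ : ∀ t ∈ Icc (0:ℝ) us, HasDerivWithinAt Ub₀ (Ub₀' t) (Icc 0 us) t)
    (hUb₀' : ContinuousOn Ub₀' (Icc 0 us))
    (U : ℝ × ℝ → Y) (Ub : ℝ × ℝ → Yb)
    (hsol : IsSolution us ubs F Fb U₀ Ub₀ U Ub) :
    (∃ g : ℝ × ℝ → Y, ContinuousOn g (Dset us ubs) ∧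
      ∀ p ∈ Dset us ubs, HasDerivWithinAt (fun v => U (p.1, v)) (g p) (Icc 0 ubs) p.2) ∧
    (∃ gb : ℝ × ℝ → Yb, ContinuousOn gb (Dset us ubs) ∧
      ∀ p ∈ Dset us ubs, HasDerivWithinAt (fun t => Ub (t, p.2)) (gb p) (Icc 0 us) p.1) ∧
    ContinuousOn (fun p : ℝ × ℝ => F p.1 p.2 (U p, Ub p)) (Dset us ubs) ∧
    ContinuousOn (fun p : ℝ × ℝ => Fb p.1 p.2 (U p, Ub p)) (Dset us ubs) := by
  have hswap : MapsTo (fun q : (ℝ × ℝ) × Yb × Y => (q.1.swap, q.2.swap)) (Dset ubs us ×ˢ univ)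
      (Dset us ubs ×ˢ univ) := fun q hq => ⟨⟨hq.1.2, hq.1.1⟩, mem_univ _⟩
  have slope_F := hasContinuousSlopeOn_of_partial_derivs hFub hFubc hFU hFUc hFUb hFUbc
  have slope_Fb := hasContinuousSlopeOn_of_partial_derivs (F := fun v u x => Fb u v x.swap)
    (F₂ := fun v u x => Fbu u v x.swap) (FY := fun v u x => FbUb u v x.swap)
    (FZ := fun v u x => FbU u v x.swap)
    (fun p hp x => hFbu p.swap ⟨hp.2, hp.1⟩ x.swap) (hFbuc.comp (by fun_prop) hswap)
    (fun p hp x => hFbUb p.swap ⟨hp.2, hp.1⟩ x.swap) (hFbUbc.comp (by fun_prop) hswap)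
    (fun p hp x => hFbU p.swap ⟨hp.2, hp.1⟩ x.swap) (hFbUc.comp (by fun_prop) hswap)
  refine ⟨hsol.exists_continuousOn_hasDerivWithinAt_snd hus.le slope_F hFbc hU₀ hU₀', ?_,
    hsol.continuousOn_comp hFc, hsol.continuousOn_comp hFbc⟩
  obtain ⟨g, hg, hUbg⟩ := hsol.swap.exists_continuousOn_hasDerivWithinAt_snd hubs.le slope_Fb
    (hFc.comp (by fun_prop) hswap) hUb₀ hUb₀'
  exact ⟨fun p => g p.swap, hg.comp continuous_swap.continuousOn fun _ hp => ⟨hp.2, hp.1⟩,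
    fun p hp => hUbg p.swap ⟨hp.2, hp.1⟩⟩

/-- C¹ regularity for two-variable ODE systems. Suppose `F, F̄` are
continuous and uniformly Lipschitz in `𝕏`, and that the partial derivative `∂F/∂ū`, the
partial Fréchet derivatives `∂F/∂U`, `∂F/∂Ū`, the partial derivative `∂F̄/∂u`, and the
partial Fréchet derivatives `∂F̄/∂U`, `∂F̄/∂Ū` all exist and are continuous on `D × 𝕏`.
If the initial data `U₀, Ū₀` are continuously differentiable, then the (unique) solution
`(U, Ū)` of the two-variable ODE system belongs to `C¹(D; 𝕏)`: in particular `∂U/∂ū` and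
`∂Ū/∂u` exist and are continuous on `D` (and `∂U/∂u = F(·,·,U,Ū)`,
`∂Ū/∂ū = F̄(·,·,U,Ū)` are continuous on `D` as well). -/
theorem stmt_4 {Y Yb : Type*}
    [NormedAddCommGroup Y] [NormedSpace ℝ Y] [CompleteSpace Y]
    [NormedAddCommGroup Yb] [NormedSpace ℝ Yb] [CompleteSpace Yb]
    (us ubs : ℝ) (hus : 0 < us) (hubs : 0 < ubs)
    (F : ℝ → ℝ → Y × Yb → Y) (Fb : ℝ → ℝ → Y × Yb → Yb)
    (hFc : ContinuousOn (fun q : (ℝ × ℝ) × Y × Yb => F q.1.1 q.1.2 q.2)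
      (Dset us ubs ×ˢ univ))
    (hFbc : ContinuousOn (fun q : (ℝ × ℝ) × Y × Yb => Fb q.1.1 q.1.2 q.2)
      (Dset us ubs ×ˢ univ))
    (M : ℝ) (hM : 0 ≤ M)
    (hFlip : ∀ p ∈ Dset us ubs, ∀ x₁ x₂ : Y × Yb,
      ‖F p.1 p.2 x₁ - F p.1 p.2 x₂‖ ≤ M * ‖x₁ - x₂‖)
    (hFblip : ∀ p ∈ Dset us ubs, ∀ x₁ x₂ : Y × Yb,
      ‖Fb p.1 p.2 x₁ - Fb p.1 p.2 x₂‖ ≤ M * ‖x₁ - x₂‖)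
    -- ∂F/∂ū exists and is continuous
    (Fub : ℝ → ℝ → Y × Yb → Y)
    (hFub : ∀ p ∈ Dset us ubs, ∀ x : Y × Yb,
      HasDerivWithinAt (fun v => F p.1 v x) (Fub p.1 p.2 x) (Set.Icc 0 ubs) p.2)
    (hFubc : ContinuousOn (fun q : (ℝ × ℝ) × Y × Yb => Fub q.1.1 q.1.2 q.2)
      (Dset us ubs ×ˢ univ))
    -- ∂F/∂U exists and is continuous
    (FU : ℝ → ℝ → Y × Yb → (Y →L[ℝ] Y))
    (hFU : ∀ p ∈ Dset us ubs, ∀ x : Y × Yb,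
      HasFDerivAt (fun y : Y => F p.1 p.2 (y, x.2)) (FU p.1 p.2 x) x.1)
    (hFUc : ContinuousOn (fun q : (ℝ × ℝ) × Y × Yb => FU q.1.1 q.1.2 q.2)
      (Dset us ubs ×ˢ univ))
    -- ∂F/∂Ū exists and is continuous
    (FUb : ℝ → ℝ → Y × Yb → (Yb →L[ℝ] Y))
    (hFUb : ∀ p ∈ Dset us ubs, ∀ x : Y × Yb,
      HasFDerivAt (fun yb : Yb => F p.1 p.2 (x.1, yb)) (FUb p.1 p.2 x) x.2)
    (hFUbc : ContinuousOn (fun q : (ℝ × ℝ) × Y × Yb => FUb q.1.1 q.1.2 q.2)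
      (Dset us ubs ×ˢ univ))
    -- ∂F̄/∂u exists and is continuous
    (Fbu : ℝ → ℝ → Y × Yb → Yb)
    (hFbu : ∀ p ∈ Dset us ubs, ∀ x : Y × Yb,
      HasDerivWithinAt (fun t => Fb t p.2 x) (Fbu p.1 p.2 x) (Set.Icc 0 us) p.1)
    (hFbuc : ContinuousOn (fun q : (ℝ × ℝ) × Y × Yb => Fbu q.1.1 q.1.2 q.2)
      (Dset us ubs ×ˢ univ))
    -- ∂F̄/∂U exists and is continuous
    (FbU : ℝ → ℝ → Y × Yb → (Y →L[ℝ] Yb))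
    (hFbU : ∀ p ∈ Dset us ubs, ∀ x : Y × Yb,
      HasFDerivAt (fun y : Y => Fb p.1 p.2 (y, x.2)) (FbU p.1 p.2 x) x.1)
    (hFbUc : ContinuousOn (fun q : (ℝ × ℝ) × Y × Yb => FbU q.1.1 q.1.2 q.2)
      (Dset us ubs ×ˢ univ))
    -- ∂F̄/∂Ū exists and is continuous
    (FbUb : ℝ → ℝ → Y × Yb → (Yb →L[ℝ] Yb))
    (hFbUb : ∀ p ∈ Dset us ubs, ∀ x : Y × Yb,
      HasFDerivAt (fun yb : Yb => Fb p.1 p.2 (x.1, yb)) (FbUb p.1 p.2 x) x.2)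
    (hFbUbc : ContinuousOn (fun q : (ℝ × ℝ) × Y × Yb => FbUb q.1.1 q.1.2 q.2)
      (Dset us ubs ×ˢ univ))
    -- continuously differentiable initial data
    (U₀ U₀' : ℝ → Y) (Ub₀ Ub₀' : ℝ → Yb)
    (hU₀ : ∀ v ∈ Set.Icc (0:ℝ) ubs, HasDerivWithinAt U₀ (U₀' v) (Set.Icc 0 ubs) v)
    (hU₀' : ContinuousOn U₀' (Set.Icc 0 ubs))
    (hUb₀ : ∀ t ∈ Set.Icc (0:ℝ) us, HasDerivWithinAt Ub₀ (Ub₀' t) (Set.Icc 0 us) t)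
    (hUb₀' : ContinuousOn Ub₀' (Set.Icc 0 us))
    -- the solution
    (U : ℝ × ℝ → Y) (Ub : ℝ × ℝ → Yb)
    (hsol : IsSolution us ubs F Fb U₀ Ub₀ U Ub) :
    (∃ g : ℝ × ℝ → Y, ContinuousOn g (Dset us ubs) ∧
      ∀ p ∈ Dset us ubs, HasDerivWithinAt (fun v => U (p.1, v)) (g p) (Set.Icc 0 ubs) p.2) ∧
    (∃ gb : ℝ × ℝ → Yb, ContinuousOn gb (Dset us ubs) ∧
      ∀ p ∈ Dset us ubs, HasDerivWithinAt (fun t => Ub (t, p.2)) (gb p) (Set.Icc 0 us) p.1) ∧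
    ContinuousOn (fun p : ℝ × ℝ => F p.1 p.2 (U p, Ub p)) (Dset us ubs) ∧
    ContinuousOn (fun p : ℝ × ℝ => Fb p.1 p.2 (U p, Ub p)) (Dset us ubs) :=
  stmt_4_general us ubs hus hubs F Fb hFc hFbc Fub hFub hFubc FU hFU hFUc FUb hFUb hFUbc
    Fbu hFbu hFbuc FbU hFbU hFbUc FbUb hFbUb hFbUbc U₀ U₀' Ub₀ Ub₀' hU₀ hU₀' hUb₀ hUb₀' U Ub hsol
end
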